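/- Let Q_1 and Q_2 be QGPs and let S be a POM match relation witnessing Q_1 ▷ Q_2. Then for every data graph G with Q_1 ≺_c G, every pairs (u_1,u_2) ∈ S and (w_1,w_2) ∈ S, and all edges e_1 = (u_1,w_1) ∈ E_1 and e_2 = (u_2,w_2) ∈ E_2 with L_1(e_1) = L_2(e_2) and C_1(e_1) ≥ C_2(e_2), the match result satisfies M^G_{Q_1}(e_1) ⊆ M^G_{Q_2}(e_2). -/

import Mathlib

/-! Formalization of graph patterns from "Revisited Containment for Graph Patterns".
Labels are modeled as natural numbers, attribute names as naturals, attribute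
values as integers. -/

/-- Comparison operators allowed in atomic attribute constraints. -/
inductive AOp : Type
  | ge | le | eq | ne
deriving DecidableEq

/-- `AOp.holds op c' c` : the value `c'` satisfies the constraint `_ op c`. -/
def AOp.holds : AOp → ℤ → ℤ → Prop
  | .ge, c', c => c' ≥ c
  | .le, c', c => c' ≤ c
  | .eq, c', c => c' = c
  | .ne, c', c => c' ≠ c

/-- A finite conjunction of atomic constraints `A op c`. -/
abbrev AttrConstraints := Finset (ℕ × AOp × ℤ)

/-- `A(v) ∼ A_P(u)` : the attribute values of a data node (a partial map from
attribute names to values) match the attribute constraints of a pattern node. -/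
def attrMatch (a : ℕ → Option ℤ) (P : AttrConstraints) : Prop :=
  ∀ c ∈ P, ∃ c', a c.1 = some c' ∧ c.2.1.holds c' c.2.2

/-- `A_1(u_1) ∼ A_2(u_2)` : the constraints over each attribute in `P2` are
entailed by those over the same attribute in `P1`. -/
def constrEntails (P1 P2 : AttrConstraints) : Prop :=
  ∀ c2 ∈ P2, ∀ x : ℤ,
    (∀ c1 ∈ P1, c1.1 = c2.1 → c1.2.1.holds x c1.2.2) → c2.2.1.holds x c2.2.2

/-- A data graph: finite node set, directed edges, labels on nodes and edges,
and a partial attribute-value map on nodes. -/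
structure DataGraph (V : Type) where
  nodes : Finset V
  edges : Finset (V × V)
  nlabel : V → ℕ
  elabel : V × V → ℕ
  attr : V → ℕ → Option ℤ

/-- Well-formedness of a data graph: edges connect nodes. -/
def DataGraph.WellFormed {V : Type} (G : DataGraph V) : Prop :=
  ∀ e ∈ G.edges, e.1 ∈ G.nodes ∧ e.2 ∈ G.nodes

/-- `Gs` is a subgraph of `G`. -/
def IsSubgraph {V : Type} (Gs G : DataGraph V) : Prop :=
  Gs.WellFormed ∧ Gs.nodes ⊆ G.nodes ∧ Gs.edges ⊆ G.edges ∧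
  (∀ v ∈ Gs.nodes, Gs.nlabel v = G.nlabel v ∧ Gs.attr v = G.attr v) ∧
  (∀ e ∈ Gs.edges, Gs.elabel e = G.elabel e)

/-- A quantified graph pattern (QGP): nodes, edges, labels, attribute
constraints on nodes and counting quantifiers on edges. -/
structure QGP (V : Type) where
  nodes : Finset V
  edges : Finset (V × V)
  nlabel : V → ℕ
  elabel : V × V → ℕ
  attrC : V → AttrConstraints
  cq : V × V → ℕ

/-- Undirected adjacency in a pattern. -/
def QGP.Adj {V : Type} (Q : QGP V) (u w : V) : Prop :=
  (u, w) ∈ Q.edges ∨ (w, u) ∈ Q.edges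

/-- Well-formedness of a QGP: edges connect nodes, counting quantifiers are
at least 1, and the pattern is connected. -/
def QGP.WellFormed {V : Type} (Q : QGP V) : Prop :=
  (∀ e ∈ Q.edges, e.1 ∈ Q.nodes ∧ e.2 ∈ Q.nodes) ∧
  (∀ e ∈ Q.edges, 1 ≤ Q.cq e) ∧
  (∀ u ∈ Q.nodes, ∀ w ∈ Q.nodes, Relation.ReflTransGen Q.Adj u w)

/-- A POM (pattern-only matching) match relation of `Q1` in `Q2`:
conditions (1)–(3) of Definition of pattern-only matching. -/
def IsPOMRel {V1 V2 : Type} (Q1 : QGP V1) (Q2 : QGP V2) (S : Set (V1 × V2)) : Prop :=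
  (∀ p ∈ S, p.1 ∈ Q1.nodes ∧ p.2 ∈ Q2.nodes) ∧
  (∀ p ∈ S, Q1.nlabel p.1 = Q2.nlabel p.2 ∧ constrEntails (Q1.attrC p.1) (Q2.attrC p.2)) ∧
  (∀ p ∈ S, ∀ w2, (w2, p.2) ∈ Q2.edges →
      ∃ w1, (w1, p.1) ∈ Q1.edges ∧ (w1, w2) ∈ S ∧
        Q1.elabel (w1, p.1) = Q2.elabel (w2, p.2)) ∧
  (∀ p ∈ S, ∀ w2, (p.2, w2) ∈ Q2.edges →
      ∃ w1, (p.1, w1) ∈ Q1.edges ∧ (w1, w2) ∈ S ∧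
        Q1.elabel (p.1, w1) = Q2.elabel (p.2, w2) ∧
        Q2.cq (p.2, w2) ≤ Q1.cq (p.1, w1))

/-- `Q1 ▷ Q2` : `Q1` matches `Q2` (pattern-only matching). -/
def POM {V1 V2 : Type} (Q1 : QGP V1) (Q2 : QGP V2) : Prop :=
  ∃ S : Set (V1 × V2), IsPOMRel Q1 Q2 S ∧ ∀ u2 ∈ Q2.nodes, ∃ u1, (u1, u2) ∈ S

/-- A conditional-simulation relation of a QGP `Q` in a data graph `G`
(conditions (1)–(3) of conditional simulation). -/
def IsSimRel {VP VD : Type} (Q : QGP VP) (G : DataGraph VD) (S : Set (VP × VD)) : Prop :=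
  (∀ p ∈ S, p.1 ∈ Q.nodes ∧ p.2 ∈ G.nodes) ∧
  (∀ p ∈ S, Q.nlabel p.1 = G.nlabel p.2 ∧ attrMatch (G.attr p.2) (Q.attrC p.1)) ∧
  (∀ p ∈ S, ∀ u', (p.1, u') ∈ Q.edges →
      ∃ T : Finset VD, Q.cq (p.1, u') ≤ T.card ∧
        ∀ v' ∈ T, (p.2, v') ∈ G.edges ∧
          G.elabel (p.2, v') = Q.elabel (p.1, u') ∧ (u', v') ∈ S) ∧
  (∀ p ∈ S, ∀ u', (u', p.1) ∈ Q.edges →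
      ∃ v', (v', p.2) ∈ G.edges ∧
        G.elabel (v', p.2) = Q.elabel (u', p.1) ∧ (u', v') ∈ S)

/-- `Q ≺_c G` via the relation `S` (conditions (1)–(4)). -/
def QGP.MatchesVia {VP VD : Type} (Q : QGP VP) (G : DataGraph VD)
    (S : Set (VP × VD)) : Prop :=
  IsSimRel Q G S ∧ ∀ u ∈ Q.nodes, ∃ v, (u, v) ∈ S

/-- `Q ≺_c G` : the data graph `G` matches the QGP `Q` via conditional simulation. -/
def QGP.Matches {VP VD : Type} (Q : QGP VP) (G : DataGraph VD) : Prop :=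
  ∃ S : Set (VP × VD), Q.MatchesVia G S

/-- The maximum conditional-simulation relation `S^G_Q` of a QGP in a data graph. -/
def QGP.maxRel {VP VD : Type} (Q : QGP VP) (G : DataGraph VD) : Set (VP × VD) :=
  ⋃₀ {S | IsSimRel Q G S}

/-- The match result `M^G_Q` on pattern nodes (∅ when `Q ⊀_c G`). -/
def QGP.MN {VP VD : Type} (Q : QGP VP) (G : DataGraph VD) (u : VP) : Set VD :=
  {v | Q.Matches G ∧ (u, v) ∈ Q.maxRel G}

/-- The match result `M^G_Q` on pattern edges (∅ when `Q ⊀_c G`). -/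
def QGP.ME {VP VD : Type} (Q : QGP VP) (G : DataGraph VD) (e : VP × VP) : Set (VD × VD) :=
  {d | Q.Matches G ∧ d ∈ G.edges ∧ (e.1, d.1) ∈ Q.maxRel G ∧
      (e.2, d.2) ∈ Q.maxRel G ∧ G.elabel d = Q.elabel e}

/-- A data node `v` satisfies a predicate (a QGP with query focus `u`) in `G`:
there is a subgraph of `G` matching the predicate via a relation containing `(u,v)`. -/
def SatPred {VP VD : Type} (Q : QGP VP) (G : DataGraph VD) (u : VP) (v : VD) : Prop :=
  ∃ (Gs : DataGraph VD) (S : Set (VP × VD)),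
    IsSubgraph Gs G ∧ Q.MatchesVia Gs S ∧ (u, v) ∈ S

/-- The shape (nodes, edges, query focus) of a predicate of a CGP. -/
structure PredShape (V : Type) where
  nodes : Finset V
  edges : Finset (V × V)
  focus : V

/-- A conditional graph pattern (CGP): global labelling/attribute/quantifier
data, a core, and finite sets of positive and negative predicates, each with
its query focus. -/
structure CGP (V : Type) where
  nlabel : V → ℕ
  elabel : V × V → ℕ
  attrC : V → AttrConstraints
  cq : V × V → ℕ
  coreNodes : Finset V
  coreEdges : Finset (V × V)
  pos : Finset (PredShape V)
  neg : Finset (PredShape V)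

/-- The core of a CGP, as a QGP. -/
def CGP.coreQGP {V : Type} (C : CGP V) : QGP V :=
  ⟨C.coreNodes, C.coreEdges, C.nlabel, C.elabel, C.attrC, C.cq⟩

/-- A predicate of a CGP, as a QGP. -/
def CGP.predQGP {V : Type} (C : CGP V) (q : PredShape V) : QGP V :=
  ⟨q.nodes, q.edges, C.nlabel, C.elabel, C.attrC, C.cq⟩

/-- The set `E⁺` of edges of positive predicates. -/
def CGP.posEdges {V : Type} [DecidableEq V] (C : CGP V) : Finset (V × V) :=
  C.pos.biUnion (·.edges)

/-- The set `E⁻` of edges of negative predicates. -/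
def CGP.negEdges {V : Type} [DecidableEq V] (C : CGP V) : Finset (V × V) :=
  C.neg.biUnion (·.edges)

/-- The positive version `C⁺` of a CGP: the QGP with nodes `V ∪ V⁺`
and edges `E ∪ E⁺`. -/
def CGP.posVersion {V : Type} [DecidableEq V] (C : CGP V) : QGP V :=
  ⟨C.coreNodes ∪ C.pos.biUnion (·.nodes), C.coreEdges ∪ C.posEdges,
   C.nlabel, C.elabel, C.attrC, C.cq⟩

/-- Well-formedness of a CGP: the core and each predicate are well-formed QGPs,
each predicate's query focus is a core node, and each predicate shares with the
core exactly its focus node. -/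
def CGP.WellFormed {V : Type} [DecidableEq V] (C : CGP V) : Prop :=
  C.coreQGP.WellFormed ∧
  (∀ q ∈ C.pos, (C.predQGP q).WellFormed ∧ q.focus ∈ C.coreNodes ∧
    q.focus ∈ q.nodes ∧ q.nodes ∩ C.coreNodes = {q.focus}) ∧
  (∀ q ∈ C.neg, (C.predQGP q).WellFormed ∧ q.focus ∈ C.coreNodes ∧
    q.focus ∈ q.nodes ∧ q.nodes ∩ C.coreNodes = {q.focus})

/-- A conditional-simulation relation of a CGP `C` in a data graph `G`:
conditions (1)–(3) on the core plus conditions (4)–(5) on predicates. -/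
def IsCondSimRel {V D : Type} (C : CGP V) (G : DataGraph D) (S : Set (V × D)) : Prop :=
  IsSimRel C.coreQGP G S ∧
  (∀ p ∈ S, ∀ q ∈ C.pos, q.focus = p.1 → SatPred (C.predQGP q) G p.1 p.2) ∧
  (∀ p ∈ S, ∀ q ∈ C.neg, q.focus = p.1 → ¬ SatPred (C.predQGP q) G p.1 p.2)

/-- `C ≺_c G` : the data graph `G` matches the CGP `C` via conditional simulation. -/
def CGP.Matches {V D : Type} (C : CGP V) (G : DataGraph D) : Prop :=
  ∃ S : Set (V × D), IsCondSimRel C G S ∧ ∀ u ∈ C.coreNodes, ∃ v, (u, v) ∈ S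

/-- The maximum conditional-simulation relation `S^G_C` of a CGP in a data graph. -/
def CGP.maxRel {V D : Type} (C : CGP V) (G : DataGraph D) : Set (V × D) :=
  ⋃₀ {S | IsCondSimRel C G S}

/-- The match result `M^G_C` on core nodes (∅ when `C ⊀_c G`). -/
def CGP.MN {V D : Type} (C : CGP V) (G : DataGraph D) (u : V) : Set D :=
  {v | C.Matches G ∧ (u, v) ∈ C.maxRel G}

/-- The match result `M^G_C` on core edges (∅ when `C ⊀_c G`). -/
def CGP.ME {V D : Type} (C : CGP V) (G : DataGraph D) (e : V × V) : Set (D × D) :=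
  {d | C.Matches G ∧ d ∈ G.edges ∧ (e.1, d.1) ∈ C.maxRel G ∧
      (e.2, d.2) ∈ C.maxRel G ∧ G.elabel d = C.elabel e}

/-- Traditional containment `C1 ⊑ C2` via the mapping `λ` (given by `lamN` on
core nodes, `lamE` on core edges): over every data graph, every match of a core
node (edge) of `C1` is a match of some node (edge) in its image under `λ`. -/
def TradContainedVia {V1 V2 : Type} (C1 : CGP V1) (C2 : CGP V2)
    (lamN : V1 → Set V2) (lamE : V1 × V1 → Set (V2 × V2)) : Prop :=
  (∀ u ∈ C1.coreNodes, lamN u ⊆ ↑C2.coreNodes) ∧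
  (∀ e ∈ C1.coreEdges, lamE e ⊆ ↑C2.coreEdges) ∧
  ∀ (D : Type) (G : DataGraph D), G.WellFormed →
    (∀ u ∈ C1.coreNodes, C1.MN G u ⊆ ⋃ u' ∈ lamN u, C2.MN G u') ∧
    (∀ e ∈ C1.coreEdges, C1.ME G e ⊆ ⋃ e' ∈ lamE e, C2.ME G e')

/-- Conditions (★) on a relation `S` between `C1⁺` and `C2⁺`. -/
def StarCond {V1 V2 : Type} [DecidableEq V1] [DecidableEq V2]
    (C1 : CGP V1) (C2 : CGP V2) (S : Set (V1 × V2)) : Prop :=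
  -- (1) S is a POM match relation witnessing C1⁺ ▷ C2⁺
  IsPOMRel C1.posVersion C2.posVersion S ∧
  (∀ u2 ∈ C2.posVersion.nodes, ∃ u1, (u1, u2) ∈ S) ∧
  -- (2) negative predicates of C2 are matched by negative predicates of C1
  (∀ p ∈ S, ∀ q2 ∈ C2.neg, q2.focus = p.2 →
      ∃ q1 ∈ C1.neg, q1.focus = p.1 ∧
        ∃ S' : Set (V2 × V1), IsPOMRel (C2.predQGP q2) (C1.predQGP q1) S' ∧
          (∀ w1 ∈ q1.nodes, ∃ w2, (w2, w1) ∈ S') ∧ (p.2, p.1) ∈ S') ∧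
  -- (3) core nodes and core edges of C1 are matched to core nodes/edges of C2
  (∀ u1 ∈ C1.coreNodes, ∃ u2 ∈ C2.coreNodes, (u1, u2) ∈ S) ∧
  (∀ e1 ∈ C1.coreEdges, ∃ e2 ∈ C2.coreEdges, (e1.1, e2.1) ∈ S ∧ (e1.2, e2.2) ∈ S)

/-- The mapping `λ` on core nodes induced by a match relation `S`. -/
def inducedLamN {V1 V2 : Type} (C2 : CGP V2) (S : Set (V1 × V2)) (u : V1) : Set V2 :=
  {u2 | u2 ∈ C2.coreNodes ∧ (u, u2) ∈ S}

/-- The mapping `λ` on core edges induced by a match relation `S`. -/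
def inducedLamE {V1 V2 : Type} (C2 : CGP V2) (S : Set (V1 × V2))
    (e : V1 × V1) : Set (V2 × V2) :=
  {e2 | e2 ∈ C2.coreEdges ∧ (e.1, e2.1) ∈ S ∧ (e.2, e2.2) ∈ S}

/-- The data nodes occurring in the match result of `C` over `G`. -/
def NodesInResult {V D : Type} (C : CGP V) (G : DataGraph D) : Set D :=
  ⋃ u ∈ C.coreNodes, C.MN G u

/-- Two data graphs have the same match result for `C`. -/
def MatchResultsAgree {V D : Type} (C : CGP V) (G G' : DataGraph D) : Prop :=
  (∀ u ∈ C.coreNodes, C.MN G u = C.MN G' u) ∧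
  (∀ e ∈ C.coreEdges, C.ME G e = C.ME G' e)

/-- `G` and `G'` are data graphs over the same node set that agree on the labels
and attribute values of all nodes occurring in their match results of `C2`, and
have the same match result of `C2`. -/
def GraphsAgreeFor {V2 D : Type} (C2 : CGP V2) (G G' : DataGraph D) : Prop :=
  G.nodes = G'.nodes ∧
  (∀ v ∈ NodesInResult C2 G ∪ NodesInResult C2 G',
      G.nlabel v = G'.nlabel v ∧ G.attr v = G'.attr v) ∧
  MatchResultsAgree C2 G G'

/-- A predicate `q` of `C1` (with query focus `q.focus`) is evaluable over a set
`lam` of core nodes of `C2`: for every data graph and every node in the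
intersection of the match sets of `lam`, satisfaction of the predicate is
determined by the match result of `C2` (together with labels and attribute
values of the nodes occurring in it). -/
def Evaluable {V1 V2 : Type} (C1 : CGP V1) (C2 : CGP V2)
    (lam : Set V2) (q : PredShape V1) : Prop :=
  ∀ (D : Type) (G G' : DataGraph D), G.WellFormed → G'.WellFormed →
    GraphsAgreeFor C2 G G' →
    ∀ v, v ∈ ⋂ u' ∈ lam, C2.MN G u' →
      (SatPred (C1.predQGP q) G q.focus v ↔ SatPred (C1.predQGP q) G' q.focus v)

/-- `r` is (a part of) a positive predicate of `C`, with the same query focus. -/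
def IsPartOfPos {V : Type} (C : CGP V) (r : PredShape V) : Prop :=
  ∃ q ∈ C.pos, r.nodes ⊆ q.nodes ∧ r.edges ⊆ q.edges ∧ r.focus = q.focus

/-- A containment match relation between two QGPs: a POM match relation
witnessing `Q1 ▷ Q2` in which moreover every node and edge of `Q1` is matched
to some node/edge of `Q2`. -/
def QGPContainRel {V1 V2 : Type} (Q1 : QGP V1) (Q2 : QGP V2)
    (S : Set (V1 × V2)) : Prop :=
  IsPOMRel Q1 Q2 S ∧ (∀ u2 ∈ Q2.nodes, ∃ u1, (u1, u2) ∈ S) ∧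
  (∀ u1 ∈ Q1.nodes, ∃ u2 ∈ Q2.nodes, (u1, u2) ∈ S) ∧
  (∀ e1 ∈ Q1.edges, ∃ e2 ∈ Q2.edges, (e1.1, e2.1) ∈ S ∧ (e1.2, e2.2) ∈ S)

/-- Remove the attribute constraints on the query focus `u`. -/
def QGP.removeFocusAttr {V : Type} [DecidableEq V] (Q : QGP V) (u : V) : QGP V :=
  { Q with attrC := fun w => if w = u then (∅ : AttrConstraints) else Q.attrC w }

/-- `Q1(u1) ≡ Q2(u2)` : equivalence of QGPs with query foci — mutual containment
(after dropping the attribute constraints on the foci) via maximum match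
relations that relate the two foci. -/
def FocusEquiv {V1 V2 : Type} [DecidableEq V1] [DecidableEq V2]
    (Q1 : QGP V1) (u1 : V1) (Q2 : QGP V2) (u2 : V2) : Prop :=
  ∃ (S12 : Set (V1 × V2)) (S21 : Set (V2 × V1)),
    QGPContainRel (Q1.removeFocusAttr u1) (Q2.removeFocusAttr u2) S12 ∧
    (∀ S, QGPContainRel (Q1.removeFocusAttr u1) (Q2.removeFocusAttr u2) S → S ⊆ S12) ∧
    QGPContainRel (Q2.removeFocusAttr u2) (Q1.removeFocusAttr u1) S21 ∧
    (∀ S, QGPContainRel (Q2.removeFocusAttr u2) (Q1.removeFocusAttr u1) S → S ⊆ S21) ∧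
    (u1, u2) ∈ S12 ∧ (u2, u1) ∈ S21

/-- The refinement relation `R⁺` for positive predicates determined by `S`. -/
def Rplus {V1 V2 : Type} [DecidableEq V1] (C1 : CGP V1) (C2 : CGP V2)
    (S : Set (V1 × V2)) : Set ((V1 × V1) × (V2 × V2)) :=
  {p | p.1 ∈ C1.posEdges ∧ p.2 ∈ C2.coreEdges ∧
       (p.1.1, p.2.1) ∈ S ∧ (p.1.2, p.2.2) ∈ S}

/-- The elimination relation `E⁺` for positive predicates determined by `S`. -/
def Eplus {V1 V2 : Type} [DecidableEq V1] [DecidableEq V2]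
    (C1 : CGP V1) (C2 : CGP V2) (S : Set (V1 × V2)) :
    Set (PredShape V1 × V2) :=
  {p | IsPartOfPos C1 p.1 ∧ (p.1.focus, p.2) ∈ S ∧ p.2 ∈ C2.coreNodes ∧
       (∃ r2 : PredShape V2, IsPartOfPos C2 r2 ∧ r2.focus = p.2 ∧
          FocusEquiv (C1.predQGP p.1) p.1.focus (C2.predQGP r2) r2.focus) ∧
       (∀ e ∈ C1.posEdges, e ∉ p.1.edges →
          (e.1 ∈ p.1.nodes → e.1 = p.1.focus) ∧
          (e.2 ∈ p.1.nodes → e.2 = p.1.focus))}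

/-- `u1 ∼ u2` for pattern nodes of two CGPs: equal labels and entailed
attribute constraints. -/
def NodeSimC {V1 V2 : Type} (C1 : CGP V1) (C2 : CGP V2) (u1 : V1) (u2 : V2) : Prop :=
  C1.nlabel u1 = C2.nlabel u2 ∧ constrEntails (C1.attrC u1) (C2.attrC u2)

/-- `e ∼ e'` for pattern edges of two CGPs: matching endpoints, equal edge
labels, and counting quantifier of `e` at least that of `e'`. -/
def EdgeSimC {V1 V2 : Type} (C1 : CGP V1) (C2 : CGP V2)
    (e : V1 × V1) (e' : V2 × V2) : Prop :=
  NodeSimC C1 C2 e.1 e'.1 ∧ NodeSimC C1 C2 e.2 e'.2 ∧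
  C1.elabel e = C2.elabel e' ∧ C2.cq e' ≤ C1.cq e

/-- Two directed edges intersect in some node (for undirected paths). -/
def EdgesTouch {V : Type} (e f : V × V) : Prop :=
  e.1 = f.1 ∨ e.1 = f.2 ∨ e.2 = f.1 ∨ e.2 = f.2

/-- An undirected path among the edges `E`, starting at the node `u`. -/
def IsUPath {V : Type} (E : Set (V × V)) (u : V) (l : List (V × V)) : Prop :=
  (∀ e ∈ l, e ∈ E) ∧ List.Chain' EdgesTouch l ∧
  (∀ e, l.head? = some e → (e.1 = u ∨ e.2 = u))

/-- The refinement relation `R⁻` for negative predicates determined by `S`: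
`(e, e')` with `e` an edge of a negative predicate of `C1`, `e'` a core edge of
`C2`, `e ∼ e'`, and undirected paths from a pair `(u,w) ∈ S` leading to `e`
resp. `e'` whose corresponding edges are already in `R⁻`. -/
inductive InRminus {V1 V2 : Type} (C1 : CGP V1) (C2 : CGP V2)
    (S : Set (V1 × V2)) : (V1 × V1) → (V2 × V2) → Prop where
  | intro (e : V1 × V1) (e' : V2 × V2) (q : PredShape V1)
      (hq : q ∈ C1.neg) (he : e ∈ q.edges) (he' : e' ∈ C2.coreEdges)
      (hsim : EdgeSimC C1 C2 e e')
      (u : V1) (w : V2) (huw : (u, w) ∈ S)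
      (l1 : List (V1 × V1)) (l2 : List (V2 × V2)) (hlen : l1.length = l2.length)
      (hp1 : IsUPath (fun x => x ∈ q.edges) u (l1 ++ [e]))
      (hp2 : IsUPath (fun x => x ∈ C2.coreEdges) w (l2 ++ [e']))
      (hrec : ∀ i : Fin l1.length,
        InRminus C1 C2 S (l1.get i) (l2.get (Fin.cast hlen i))) :
      InRminus C1 C2 S e e'

/-- The elimination relation `E⁻` for negative predicates determined by `S`. -/
def Eminus {V1 V2 : Type} [DecidableEq V1] [DecidableEq V2]
    (C1 : CGP V1) (C2 : CGP V2) (S : Set (V1 × V2)) :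
    Set (PredShape V1 × V2) :=
  {p | p.1 ∈ C1.neg ∧ (p.1.focus, p.2) ∈ S ∧
       ∃ q2 ∈ C2.neg, q2.focus = p.2 ∧
         FocusEquiv (C1.predQGP p.1) p.1.focus (C2.predQGP q2) q2.focus}

/-! Pattern-only matching composes with conditional simulation: if `S` is a POM match relation of
`Q1` in `Q2` and `R` simulates `Q1` in `G`, then `S.inv ○ R` simulates `Q2` in `G`. Hence `S`
carries the maximum simulation of `Q1` into that of `Q2`, and the match of an edge only has to be
transported endpoint by endpoint. -/

section Entailment

theorem AOp.exists_not_holds : ∀ (op : AOp) (c : ℤ), ∃ x, ¬ op.holds x c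
  | .ge, c => ⟨c - 1, (sub_one_lt c).not_ge⟩
  | .le, c => ⟨c + 1, (lt_add_one c).not_ge⟩
  | .eq, c => ⟨c + 1, (lt_add_one c).ne'⟩
  | .ne, c => ⟨c, not_not_intro rfl⟩

variable {P1 P2 : AttrConstraints}

-- An attribute unconstrained in `P1` may take a value violating a constraint of `P2`.
theorem constrEntails.exists_attr_eq (h : constrEntails P1 P2) {c2 : ℕ × AOp × ℤ}
    (hc2 : c2 ∈ P2) : ∃ c1 ∈ P1, c1.1 = c2.1 := by
  by_contra! unconstrained
  obtain ⟨x, hx⟩ := c2.2.1.exists_not_holds c2.2.2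
  exact hx (h c2 hc2 x fun c1 hc1 hattr => absurd hattr (unconstrained c1 hc1))

theorem attrMatch.of_constrEntails {a : ℕ → Option ℤ} (ha : attrMatch a P1)
    (h : constrEntails P1 P2) : attrMatch a P2 := by
  intro c2 hc2
  obtain ⟨x, hx⟩ : ∃ x, a c2.1 = some x := by
    obtain ⟨c1, hc1, hattr⟩ := h.exists_attr_eq hc2
    obtain ⟨x, hx, -⟩ := ha c1 hc1
    exact ⟨x, hattr ▸ hx⟩
  refine ⟨x, hx, h c2 hc2 x fun c1 hc1 hattr => ?_⟩
  obtain ⟨y, hy, hholds⟩ := ha c1 hc1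
  have hyx : y = x := Option.some.inj (hy.symm.trans (hattr ▸ hx))
  exact hyx ▸ hholds

end Entailment

section Composition

open scoped SetRel

variable {V1 V2 D : Type} {Q1 : QGP V1} {Q2 : QGP V2} {G : DataGraph D}
  {S : SetRel V1 V2} {R : SetRel V1 D}

theorem IsPOMRel.isSimRel_comp (hS : IsPOMRel Q1 Q2 S) (hR : IsSimRel Q1 G R) :
    IsSimRel Q2 G (S.inv ○ R) := by
  obtain ⟨S_nodes, S_compat, S_in, S_out⟩ := hS
  obtain ⟨R_nodes, R_compat, R_out, R_in⟩ := hR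
  refine ⟨?nodes, ?compat, ?outgoing, ?incoming⟩
  case nodes =>
    rintro ⟨u2, v⟩ ⟨u1, hu, hv⟩
    exact ⟨(S_nodes _ hu).2, (R_nodes _ hv).2⟩
  case compat =>
    rintro ⟨u2, v⟩ ⟨u1, hu, hv⟩
    obtain ⟨S_label, S_entails⟩ := S_compat _ hu
    obtain ⟨R_label, R_attr⟩ := R_compat _ hv
    exact ⟨S_label.symm.trans R_label, R_attr.of_constrEntails S_entails⟩
  case outgoing =>
    rintro ⟨u2, v⟩ ⟨u1, hu, hv⟩ w2 he2
    obtain ⟨w1, he1, hw, S_label, hcq⟩ := S_out _ hu w2 he2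
    obtain ⟨T, hcard, hT⟩ := R_out _ hv w1 he1
    refine ⟨T, hcq.trans hcard, fun v' hv' => ?_⟩
    obtain ⟨hd, R_label, hwv'⟩ := hT v' hv'
    exact ⟨hd, R_label.trans S_label, w1, hw, hwv'⟩
  case incoming =>
    rintro ⟨u2, v⟩ ⟨u1, hu, hv⟩ w2 he2
    obtain ⟨w1, he1, hw, S_label⟩ := S_in _ hu w2 he2
    obtain ⟨v', hd, R_label, hwv'⟩ := R_in _ hv w1 he1
    exact ⟨v', hd, R_label.trans S_label, w1, hw, hwv'⟩

theorem POM.matches (h : POM Q1 Q2) (hM : Q1.Matches G) : Q2.Matches G := by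
  obtain ⟨S, hS, S_covers⟩ := h
  obtain ⟨R, hR, R_covers⟩ := hM
  refine ⟨SetRel.inv S ○ R, hS.isSimRel_comp hR, fun u2 hu2 => ?_⟩
  obtain ⟨u1, hu⟩ := S_covers u2 hu2
  obtain ⟨v, hv⟩ := R_covers u1 (hS.1 _ hu).1
  exact ⟨v, u1, hu, hv⟩

theorem IsPOMRel.mem_maxRel (hS : IsPOMRel Q1 Q2 S) {u1 : V1} {u2 : V2} {v : D}
    (hu : (u1, u2) ∈ S) (hv : (u1, v) ∈ Q1.maxRel G) : (u2, v) ∈ Q2.maxRel G := by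
  obtain ⟨R, hR, hvR⟩ := hv
  exact ⟨S.inv ○ R, hS.isSimRel_comp hR, u1, hu, hvR⟩

end Composition

theorem pom_edge_match_subset_general {V1 V2 D : Type} {Q1 : QGP V1} {Q2 : QGP V2}
    {S : Set (V1 × V2)} (hS : IsPOMRel Q1 Q2 S)
    (hcov : ∀ u2 ∈ Q2.nodes, ∃ u1, (u1, u2) ∈ S)
    {G : DataGraph D} (hM : Q1.Matches G) {u1 w1 : V1} {u2 w2 : V2}
    (hu : (u1, u2) ∈ S) (hw : (w1, w2) ∈ S)
    (hlab : Q1.elabel (u1, w1) = Q2.elabel (u2, w2)) :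
    Q1.ME G (u1, w1) ⊆ Q2.ME G (u2, w2) := by
  have hQ : POM Q1 Q2 := ⟨S, hS, hcov⟩
  rintro ⟨v, v'⟩ ⟨-, hd, hv, hv', d_label⟩
  exact ⟨hQ.matches hM, hd, hS.mem_maxRel hu hv, hS.mem_maxRel hw hv', d_label.trans hlab⟩

/-- If `S` is a POM match relation witnessing `Q1 ▷ Q2`, then for
every data graph `G` with `Q1 ≺_c G`, all pairs `(u1,u2), (w1,w2) ∈ S` and all
edges `e1 = (u1,w1) ∈ E1`, `e2 = (u2,w2) ∈ E2` with equal labels and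
`C1(e1) ≥ C2(e2)`, `M^G_{Q1}(e1) ⊆ M^G_{Q2}(e2)`. -/
theorem pom_edge_match_subset {V1 V2 D : Type} (Q1 : QGP V1) (Q2 : QGP V2)
    (hQ1 : Q1.WellFormed) (hQ2 : Q2.WellFormed)
    (S : Set (V1 × V2)) (hS : IsPOMRel Q1 Q2 S)
    (hcov : ∀ u2 ∈ Q2.nodes, ∃ u1, (u1, u2) ∈ S)
    (G : DataGraph D) (hG : G.WellFormed) (hM : Q1.Matches G)
    (u1 w1 : V1) (u2 w2 : V2)
    (hu : (u1, u2) ∈ S) (hw : (w1, w2) ∈ S)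
    (he1 : (u1, w1) ∈ Q1.edges) (he2 : (u2, w2) ∈ Q2.edges)
    (hlab : Q1.elabel (u1, w1) = Q2.elabel (u2, w2))
    (hcq : Q2.cq (u2, w2) ≤ Q1.cq (u1, w1)) :
    Q1.ME G (u1, w1) ⊆ Q2.ME G (u2, w2) :=
  pom_edge_match_subset_general hS hcov hM hu hw hlab
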